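/- Let p ≥ 1 and n be natural numbers with n > p·(p+3)/2 + 1, set φ = (4·n − 4)/((n − p·(p+3)/2)² − 1), and let ℓ₁ ≥ ℓ₂ > 0 be real numbers with relative eigengap δ = (ℓ₁ − ℓ₂)/ℓ₁. Then φ + Real.log ℓ₁ + Real.log ℓ₂ − 2·Real.log((ℓ₁ + ℓ₂)/2) > 0 if and only if δ < 2·(1 − Real.exp(φ) + Real.exp(φ/2)·Real.sqrt(Real.exp(φ) − 1)). -/

import Mathlib

/-!
After exponentiation, the difference of criteria is positive exactly when the squared arithmetic
mean of the two eigenvalues is less than `exp φ` times their product. Dividing by `ℓ₁ ^ 2` leaves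
a quadratic inequality in `δ`; its vertex is at `2 * (1 - exp φ) ≤ 0 ≤ δ`, so only its larger root
matters.
-/

theorem zero_lt_add_log_sub_two_mul_log_iff {φ x y m : ℝ} (hx : 0 < x) (hy : 0 < y) (hm : 0 < m) :
    0 < φ + Real.log x + Real.log y - 2 * Real.log m ↔ m ^ 2 < Real.exp φ * (x * y) := by
  have log_sq : Real.log (m ^ 2) = 2 * Real.log m := by
    rw [Real.log_pow, Nat.cast_ofNat]
  have log_exp_mul : Real.log (Real.exp φ * (x * y)) = φ + Real.log x + Real.log y := by
    rw [Real.log_mul (by positivity) (by positivity), Real.log_exp, Real.log_mul hx.ne' hy.ne',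
      add_assoc]
  rw [← log_sq, ← log_exp_mul, sub_pos, Real.log_lt_log_iff (by positivity) (by positivity)]

theorem sq_mean_lt_mul_iff_of_eq_relative_gap {x y c δ : ℝ} (hx : x ≠ 0) (hδ : δ = (x - y) / x) :
    ((x + y) / 2) ^ 2 < c * (x * y) ↔ (1 - δ / 2) ^ 2 < c * (1 - δ) := by
  have hy : y = x * (1 - δ) := by
    rw [hδ]
    field_simp
    ring
  have sq_mean : ((x + y) / 2) ^ 2 = x ^ 2 * (1 - δ / 2) ^ 2 := by
    rw [hy]
    ring
  have product : c * (x * y) = x ^ 2 * (c * (1 - δ)) := by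
    rw [hy]
    ring
  rw [sq_mean, product, mul_lt_mul_iff_right₀ (by positivity)]

theorem sq_one_sub_half_lt_iff_lt_larger_root {c δ : ℝ} (hc : 0 ≤ c) (hδ : 2 * (1 - c) ≤ δ) :
    (1 - δ / 2) ^ 2 < c * (1 - δ) ↔ δ < 2 * (1 - c + √c * √(c - 1)) := by
  calc
    (1 - δ / 2) ^ 2 < c * (1 - δ) ↔ (δ / 2 - (1 - c)) ^ 2 < c * (c - 1) := by
      constructor <;> intro h <;> linarith
    _ ↔ δ / 2 - (1 - c) < √c * √(c - 1) := by
      rw [← Real.sqrt_mul hc, Real.lt_sqrt (by linarith)]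
    _ ↔ δ < 2 * (1 - c + √c * √(c - 1)) := by
      constructor <;> intro h <;> linarith

theorem aicc_penalty_pos {n k : ℝ} (hk : 0 ≤ k) (hn : k + 1 < n) :
    0 < (4 * n - 4) / ((n - k) ^ 2 - 1) := by
  have one_lt_sq : 1 < (n - k) ^ 2 := one_lt_pow₀ (by linarith) two_ne_zero
  exact div_pos (by linarith) (by linarith)

theorem aicc_releigengap_threshold_general {φ ℓ₁ ℓ₂ δ : ℝ} (hφ : 0 ≤ φ) (h12 : ℓ₂ ≤ ℓ₁)
    (h2pos : 0 < ℓ₂) (hδ : δ = (ℓ₁ - ℓ₂) / ℓ₁) :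
    0 < φ + Real.log ℓ₁ + Real.log ℓ₂ - 2 * Real.log ((ℓ₁ + ℓ₂) / 2) ↔
      δ < 2 * (1 - Real.exp φ + Real.exp (φ / 2) * Real.sqrt (Real.exp φ - 1)) := by
  have h1pos : 0 < ℓ₁ := h2pos.trans_le h12
  have vertex_le : 2 * (1 - Real.exp φ) ≤ δ := by
    have one_le_exp : 1 ≤ Real.exp φ := Real.one_le_exp hφ
    have gap_nonneg : 0 ≤ δ := hδ ▸ div_nonneg (sub_nonneg.2 h12) h1pos.le
    linarith
  rw [zero_lt_add_log_sub_two_mul_log_iff h1pos h2pos (by positivity),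
    sq_mean_lt_mul_iff_of_eq_relative_gap h1pos.ne' hδ,
    sq_one_sub_half_lt_iff_lt_larger_root (Real.exp_nonneg φ) vertex_le, Real.exp_half]

theorem aicc_releigengap_threshold (p n : ℕ) (hp : 1 ≤ p)
    (hn : (p : ℝ) * (p + 3) / 2 + 1 < (n : ℝ))
    (φ : ℝ) (hφ : φ = (4 * (n : ℝ) - 4) / (((n : ℝ) - (p : ℝ) * (p + 3) / 2) ^ 2 - 1))
    (ℓ₁ ℓ₂ : ℝ) (h12 : ℓ₂ ≤ ℓ₁) (h2pos : 0 < ℓ₂)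
    (δ : ℝ) (hδ : δ = (ℓ₁ - ℓ₂) / ℓ₁) :
    0 < φ + Real.log ℓ₁ + Real.log ℓ₂ - 2 * Real.log ((ℓ₁ + ℓ₂) / 2) ↔
      δ < 2 * (1 - Real.exp φ + Real.exp (φ / 2) * Real.sqrt (Real.exp φ - 1)) := by
  have penalty_pos : 0 < φ := hφ ▸ aicc_penalty_pos (by positivity) hn
  exact aicc_releigengap_threshold_general penalty_pos.le h12 h2pos hδ
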